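/- (CLEM E-step: first latent expectation.) Let ν>0, σ²>0, r∈(0,1) and μ₁,μ₂∈ℝ. For all y₁,y₂∈ℝ, with y_i* = y_i − μ_i and v(u) = 1 + (1−r)u²/(νσ²), one has ∫₀^∞ ∫₀^∞ z₁ · f(y₁|z₁,μ₁) · f(y₂|z₂,μ₂) · g_{ν/2,r}(z₁,z₂) dz₁ dz₂ = (2(1−r)^{ν/2+2} Γ((ν+1)/2) Γ((ν+3)/2)/(π ν² σ² Γ(ν/2)²)) · ₂F₁((ν+1)/2, (ν+3)/2; ν/2; r/(v(y₁*)v(y₂*))) / (v(y₁*)^{(ν+3)/2} · v(y₂*)^{(ν+1)/2}). Dividing by the pairwise joint density f(y₁,y₂) gives the CLEM conditional expectation ζ₁ = E(Z_{t} | Y_t=y₁, Y_{t−i}=y₂). -/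

import Mathlib

open MeasureTheory Real Set

/-- Modified Bessel function of the first kind (series form). -/
noncomputable def besselI (α x : ℝ) : ℝ :=
  ∑' k : ℕ, (x / 2) ^ (2 * (k : ℝ) + α) / (Real.Gamma ((k : ℝ) + α + 1) * (Nat.factorial k : ℝ))

/-- Gamma density with rate `γ` and shape `α`. -/
noncomputable def gammaPdf (γ α z : ℝ) : ℝ :=
  γ ^ α * z ^ (α - 1) * Real.exp (-γ * z) / Real.Gamma α

/-- Kibble bivariate gamma density with parameters `φ > 0` and `r ∈ (0,1)`. -/
noncomputable def kibble (φ r z₁ z₂ : ℝ) : ℝ :=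
  φ ^ (φ + 1) / ((1 - r) * Real.Gamma φ) * (z₁ * z₂ / r) ^ ((φ - 1) / 2) *
    Real.exp (-φ * (z₁ + z₂) / (1 - r)) *
    besselI (φ - 1) (2 * φ * Real.sqrt (r * z₁ * z₂) / (1 - r))

/-- Conditional normal density of the NSVt model given latent `z`: `N(μ, σ²/z)`. -/
noncomputable def normCond (σ μ y z : ℝ) : ℝ :=
  Real.sqrt z / (Real.sqrt (2 * Real.pi) * σ) * Real.exp (-z * (y - μ) ^ 2 / (2 * σ ^ 2))

/-- Student-t density with `ν` degrees of freedom, location `μ` and scale `σ`. -/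
noncomputable def studentTPdf (ν μ σ y : ℝ) : ℝ :=
  Real.Gamma ((ν + 1) / 2) / (Real.Gamma (ν / 2) * Real.sqrt (Real.pi * ν) * σ) *
    (1 + (y - μ) ^ 2 / (ν * σ ^ 2)) ^ (-(ν + 1) / 2)

/-- Gauss hypergeometric series `₂F₁(a₁,a₂;b;x)`. -/
noncomputable def hyp2F1 (a₁ a₂ b x : ℝ) : ℝ :=
  ∑' k : ℕ, Real.Gamma ((k : ℝ) + a₁) * Real.Gamma ((k : ℝ) + a₂) * Real.Gamma b /
    (Real.Gamma a₁ * Real.Gamma a₂ * Real.Gamma ((k : ℝ) + b)) * x ^ k / (Nat.factorial k : ℝ)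

/-- Confluent hypergeometric (Kummer) series `₁F₁(a;b;x)`. -/
noncomputable def hyp1F1 (a b x : ℝ) : ℝ :=
  ∑' k : ℕ, Real.Gamma ((k : ℝ) + a) * Real.Gamma b /
    (Real.Gamma a * Real.Gamma ((k : ℝ) + b)) * x ^ k / (Nat.factorial k : ℝ)

/-- Generalized Laguerre polynomial of degree `n` with parameter `α`. -/
noncomputable def laguerreL (n : ℕ) (α x : ℝ) : ℝ :=
  ∑ i ∈ Finset.range (n + 1),
    (-1 : ℝ) ^ i * Real.Gamma ((n : ℝ) + α + 1) /
      (Real.Gamma (α + (i : ℝ) + 1) * (Nat.factorial (n - i) : ℝ) * (Nat.factorial i : ℝ)) * x ^ i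

/-- Negative binomial pmf with parameters `φ > 0` and `r ∈ (0,1)`. -/
noncomputable def nbinomPmf (φ r : ℝ) (u : ℕ) : ℝ :=
  Real.Gamma (φ + u) / (Real.Gamma φ * (Nat.factorial u : ℝ)) * (1 - r) ^ φ * r ^ u

/-- The quantity `ω(y₁,y₂)` appearing in the pairwise joint density of the NSVt model. -/
noncomputable def omegaFn (ν σ r μ₁ μ₂ y₁ y₂ : ℝ) : ℝ :=
  ((1 + (1 - r) * (y₁ - μ₁) ^ 2 / (ν * σ ^ 2)) *
    (1 + (1 - r) * (y₂ - μ₂) ^ 2 / (ν * σ ^ 2)))⁻¹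

/-- Pairwise joint density of the NSVt model (with `r = ρʲ`). -/
noncomputable def pairDensity (ν σ r μ₁ μ₂ y₁ y₂ : ℝ) : ℝ :=
  (1 - r) ^ (ν / 2 + 1) / (Real.pi * ν * σ ^ 2) *
    (Real.Gamma ((ν + 1) / 2) / Real.Gamma (ν / 2)) ^ 2 *
    omegaFn ν σ r μ₁ μ₂ y₁ y₂ ^ ((ν + 1) / 2) *
    hyp2F1 ((ν + 1) / 2) ((ν + 1) / 2) (ν / 2) (r * omegaFn ν σ r μ₁ μ₂ y₁ y₂)

/-!
Expanding the Bessel function exhibits the Kibble density as a negative binomial mixture of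
products of gamma densities: given the mixing index `k`, the two latents are independent gamma
variables of shape `φ + k` and rate `φ / (1 - r)`. Integrating `z ^ p * exp (-(t * z))` against a
gamma component gives a Gamma quotient over powers of the rate and of `v = tiltFactor φ r t`, so
the double integral against the mixture is a `₂F₁` series in `r / (v₁ * v₂)`. The normal likelihood
of `y` given `z` is, up to a constant, `√z * exp (-(t * z))` with `t = (y - μ)² / (2σ²)`, so every
latent moment is such an integral.
-/

section Interchange

variable {α β ι 𝕜 : Type*} [MeasurableSpace α] [MeasurableSpace β] [Countable ι] [RCLike 𝕜]
  {μ : Measure α} {ν : Measure β}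

lemma ae_summable_norm_of_summable_integral_norm {E : Type*} [NormedAddCommGroup E]
    {F : ι → α → E} (hF : ∀ i, Integrable (F i) μ) (hsum : Summable fun i => ∫ x, ‖F i x‖ ∂μ) :
    ∀ᵐ x ∂μ, Summable fun i => ‖F i x‖ := by
  refine summable_norm_of_tsum_eLpNorm_ne_top le_rfl (fun i => (hF i).aestronglyMeasurable) ?_
  simp_rw [eLpNorm_one_eq_lintegral_enorm, ← ofReal_integral_norm_eq_lintegral_enorm (hF _)]
  exact hsum.tsum_ofReal_ne_top

lemma hasSum_integral_mul_integral {f : ι → α → 𝕜} {g : ι → β → 𝕜}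
    (hf : ∀ i, Integrable (f i) μ) (hg : ∀ i, Integrable (g i) ν)
    (hsum : Summable fun i => (∫ x, ‖f i x‖ ∂μ) * ∫ y, ‖g i y‖ ∂ν) :
    HasSum (fun i => (∫ x, f i x ∂μ) * ∫ y, g i y ∂ν)
      (∫ y, ∫ x, ∑' i, f i x * g i y ∂μ ∂ν) := by
  have hinner : ∀ᵐ y ∂ν, ∫ x, ∑' i, f i x * g i y ∂μ = ∑' i, (∫ x, f i x ∂μ) * g i y := by
    have norm_term (i : ι) (y : β) :
        ‖(∫ x, ‖f i x‖ ∂μ) * ‖g i y‖‖ = (∫ x, ‖f i x‖ ∂μ) * ‖g i y‖ :=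
      norm_of_nonneg (mul_nonneg (integral_nonneg fun _ => norm_nonneg _) (norm_nonneg _))
    have hsummable : ∀ᵐ y ∂ν, Summable fun i => (∫ x, ‖f i x‖ ∂μ) * ‖g i y‖ := by
      simpa only [norm_term] using ae_summable_norm_of_summable_integral_norm
        (fun i => (hg i).norm.const_mul (∫ x, ‖f i x‖ ∂μ))
        (by simpa only [norm_term, integral_const_mul] using hsum)
    filter_upwards [hsummable] with y hy
    rw [← integral_tsum_of_summable_integral_norm (fun i => (hf i).mul_const _)]
    · simp_rw [integral_mul_const]
    · simpa only [norm_mul, integral_mul_const] using hy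
  rw [integral_congr_ae hinner]
  simp_rw [← integral_const_mul]
  refine hasSum_integral_of_summable_integral_norm (fun i => (hg i).const_mul _) ?_
  simp_rw [norm_mul, integral_const_mul]
  exact hsum.of_nonneg_of_le (fun i => by positivity) fun i => by
    gcongr
    exact norm_integral_le_integral_norm _

end Interchange

section Hypergeometric

variable {a a₁ a₂ b x : ℝ}

lemma Gamma_natCast_add_div_Gamma (ha : ∀ n : ℕ, a ≠ -n) (k : ℕ) :
    Gamma (k + a) / Gamma a = (ascPochhammer ℝ k).eval a := by
  induction k with
  | zero => simp [Gamma_ne_zero ha]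
  | succ k ih =>
    have hk : (k : ℝ) + a ≠ 0 := fun h => ha k (by linarith)
    rw [ascPochhammer_succ_eval, ← ih, Nat.cast_succ, add_right_comm, Gamma_add_one hk]
    ring

lemma hyp2F1_comm : hyp2F1 a₁ a₂ b x = hyp2F1 a₂ a₁ b x := by
  unfold hyp2F1
  exact tsum_congr fun k => by ring

lemma hasSum_hyp2F1 (ha₁ : ∀ n : ℕ, a₁ ≠ -n) (ha₂ : ∀ n : ℕ, a₂ ≠ -n) (hb : ∀ n : ℕ, b ≠ -n)
    (hx : |x| < 1) :
    HasSum (fun k : ℕ => Gamma (k + a₁) * Gamma (k + a₂) * Gamma b /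
      (Gamma a₁ * Gamma a₂ * Gamma (k + b)) * x ^ k / k.factorial) (hyp2F1 a₁ a₂ b x) := by
  have hradius : (ordinaryHypergeometricSeries ℝ a₁ a₂ b).radius = 1 :=
    ordinaryHypergeometricSeries_radius_eq_one ℝ a₁ a₂ b fun n =>
      ⟨fun h => ha₁ n (by linarith), fun h => ha₂ n (by linarith), fun h => hb n (by linarith)⟩
  have hmem : x ∈ Metric.eball (0 : ℝ) (ordinaryHypergeometricSeries ℝ a₁ a₂ b).radius := by
    rw [hradius, mem_eball_zero_iff, ← ofReal_norm, norm_eq_abs]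
    exact ENNReal.ofReal_lt_one.2 hx
  refine (((ordinaryHypergeometricSeries ℝ a₁ a₂ b).summable hmem).congr fun k => ?_).hasSum
  rw [ordinaryHypergeometricSeries_apply_eq, ← Gamma_natCast_add_div_Gamma ha₁,
    ← Gamma_natCast_add_div_Gamma ha₂, ← Gamma_natCast_add_div_Gamma hb, smul_eq_mul, inv_div]
  ring

end Hypergeometric

section GammaDensity

variable {α γ p t z : ℝ}

lemma gammaPdf_nonneg (hγ : 0 ≤ γ) (hα : 0 ≤ α) (hz : 0 ≤ z) : 0 ≤ gammaPdf γ α z := by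
  have := Gamma_nonneg_of_nonneg hα
  unfold gammaPdf
  positivity

lemma rpow_mul_exp_mul_gammaPdf (hz : 0 < z) :
    z ^ p * exp (-(t * z)) * gammaPdf γ α z =
      γ ^ α / Gamma α * (z ^ (α + p - 1) * exp (-((γ + t) * z))) := by
  have hpow : z ^ (α + p - 1) = z ^ p * z ^ (α - 1) := by rw [← rpow_add hz]; ring_nf
  have hexp : exp (-((γ + t) * z)) = exp (-(t * z)) * exp (-γ * z) := by rw [← exp_add]; ring_nf
  rw [hpow, hexp, gammaPdf]
  ring

lemma integrableOn_rpow_mul_exp_mul_gammaPdf (hγ : 0 < γ) (hp : 0 < α + p) (ht : 0 < 1 + t / γ) :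
    IntegrableOn (fun z => z ^ p * exp (-(t * z)) * gammaPdf γ α z) (Ioi 0) := by
  have h : IntegrableOn (fun z : ℝ => z ^ (α + p - 1) * exp (-((γ + t) * z))) (Ioi 0) := by
    have hexp : -1 < α + p - 1 := by linarith
    have hrate : 0 < γ + t := by
      rw [show γ + t = γ * (1 + t / γ) by field_simp]
      positivity
    simpa only [rpow_one, neg_mul] using integrableOn_rpow_mul_exp_neg_mul_rpow hexp one_pos hrate
  exact (integrableOn_congr_fun (fun z hz => rpow_mul_exp_mul_gammaPdf hz) measurableSet_Ioi).2
    (h.const_mul _)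

lemma integral_rpow_mul_exp_mul_gammaPdf (hγ : 0 < γ) (hp : 0 < α + p) (ht : 0 < 1 + t / γ) :
    ∫ z in Ioi 0, z ^ p * exp (-(t * z)) * gammaPdf γ α z =
      Gamma (α + p) / Gamma α / (γ ^ p * (1 + t / γ) ^ (α + p)) := by
  have hscale : γ + t = γ * (1 + t / γ) := by field_simp
  rw [setIntegral_congr_fun measurableSet_Ioi fun z hz => rpow_mul_exp_mul_gammaPdf hz,
    integral_const_mul, integral_rpow_mul_exp_neg_mul_Ioi hp (by rw [hscale]; positivity), hscale,
    one_div, inv_rpow (by positivity), mul_rpow hγ.le ht.le, rpow_add hγ]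
  field_simp

end GammaDensity

section Kibble

variable {φ r : ℝ}

lemma nbinomPmf_nonneg (hφ : 0 ≤ φ) (hr₀ : 0 ≤ r) (hr₁ : r ≤ 1) (k : ℕ) :
    0 ≤ nbinomPmf φ r k := by
  have := Gamma_nonneg_of_nonneg hφ
  have : 0 ≤ Gamma (φ + k) := Gamma_nonneg_of_nonneg (by positivity)
  have := rpow_nonneg (sub_nonneg.2 hr₁) φ
  unfold nbinomPmf
  positivity

lemma div_rpow_half_mul_mul_sqrt_rpow {c x : ℝ} (hr : 0 < r) (hc : 0 ≤ c) (hx : 0 < x) (α : ℝ)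
    (k : ℕ) :
    (x / r) ^ (α / 2) * (c * √(r * x)) ^ (2 * k + α) = c ^ (2 * k + α) * r ^ k * x ^ (k + α) := by
  have hsqrt : √(r * x) ^ (2 * k + α) = r ^ k * r ^ (α / 2) * (x ^ k * x ^ (α / 2)) := by
    rw [sqrt_eq_rpow, ← rpow_mul (by positivity), show 1 / 2 * (2 * k + α) = k + α / 2 by ring,
      mul_rpow hr.le hx.le, rpow_add hr, rpow_add hx, rpow_natCast, rpow_natCast]
  have hx_pow : x ^ (k + α) = x ^ k * x ^ (α / 2) * x ^ (α / 2) := by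
    rw [mul_assoc, ← rpow_add hx, add_halves, rpow_add hx, rpow_natCast]
  rw [mul_rpow hc (by positivity), hsqrt, hx_pow, div_rpow hx.le hr.le]
  field_simp

lemma kibble_normalization (hφ : 0 < φ) (hr : r < 1) (k : ℕ) :
    φ ^ (φ + 1) / (1 - r) * (φ / (1 - r)) ^ (2 * k + (φ - 1)) =
      (1 - r) ^ φ * ((φ / (1 - r)) ^ (φ + k)) ^ 2 := by
  have hr' : 0 < 1 - r := sub_pos.2 hr
  have hsplit : ((φ / (1 - r)) ^ (φ + k)) ^ 2 =
      (φ / (1 - r)) ^ (φ + 1) * (φ / (1 - r)) ^ (2 * k + (φ - 1)) := by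
    rw [← rpow_mul_natCast (by positivity), ← rpow_add (by positivity)]
    push_cast
    ring_nf
  rw [hsplit, div_rpow hφ.le hr'.le (φ + 1), rpow_add_one hr'.ne']
  field_simp

lemma kibble_eq_tsum_nbinomPmf_mul_gammaPdf {z₁ z₂ : ℝ} (hφ : 0 < φ) (hr₀ : 0 < r) (hr₁ : r < 1)
    (hz₁ : 0 < z₁) (hz₂ : 0 < z₂) :
    kibble φ r z₁ z₂ = ∑' k : ℕ, nbinomPmf φ r k *
      (gammaPdf (φ / (1 - r)) (φ + k) z₁ * gammaPdf (φ / (1 - r)) (φ + k) z₂) := by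
  have hr' : 0 < 1 - r := sub_pos.2 hr₁
  rw [kibble, besselI, ← tsum_mul_left]
  refine tsum_congr fun k => ?_
  have hexp : exp (-φ * (z₁ + z₂) / (1 - r)) =
      exp (-(φ / (1 - r)) * z₁) * exp (-(φ / (1 - r)) * z₂) := by
    rw [← exp_add]
    ring_nf
  have harg : 2 * φ * √(r * z₁ * z₂) / (1 - r) / 2 = φ / (1 - r) * √(r * (z₁ * z₂)) := by
    rw [mul_assoc r]
    ring
  have hpow := div_rpow_half_mul_mul_sqrt_rpow hr₀ (div_pos hφ hr').le (mul_pos hz₁ hz₂) (φ - 1) k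
  have hprod : (z₁ * z₂) ^ (k + (φ - 1)) = z₁ ^ (φ + k - 1) * z₂ ^ (φ + k - 1) := by
    rw [mul_rpow hz₁.le hz₂.le]
    ring_nf
  have hΓ : Gamma (φ + k) ≠ 0 := (Gamma_pos_of_pos (by positivity)).ne'
  have hΓ_arg : (k : ℝ) + (φ - 1) + 1 = φ + k := by ring
  calc
    _ = φ ^ (φ + 1) / (1 - r) / (Gamma φ * (Gamma (φ + k) * k.factorial)) *
          exp (-φ * (z₁ + z₂) / (1 - r)) * ((z₁ * z₂ / r) ^ ((φ - 1) / 2) *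
            (φ / (1 - r) * √(r * (z₁ * z₂))) ^ (2 * k + (φ - 1))) := by
      rw [harg, hΓ_arg]
      field_simp
    _ = φ ^ (φ + 1) / (1 - r) * (φ / (1 - r)) ^ (2 * k + (φ - 1)) * r ^ k /
          (Gamma φ * (Gamma (φ + k) * k.factorial)) *
          (z₁ ^ (φ + k - 1) * exp (-(φ / (1 - r)) * z₁) *
            (z₂ ^ (φ + k - 1) * exp (-(φ / (1 - r)) * z₂))) := by
      rw [hpow, hprod, hexp]
      ring
    _ = _ := by
      rw [kibble_normalization hφ hr₁, nbinomPmf, gammaPdf, gammaPdf]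
      field_simp

lemma hasSum_nbinomPmf_mul_Gamma_div_Gamma {γ p₁ p₂ v₁ v₂ : ℝ} (hφ : 0 < φ) (hγ : 0 < γ)
    (hp₁ : 0 < φ + p₁) (hp₂ : 0 < φ + p₂) (hv₁ : 0 < v₁) (hv₂ : 0 < v₂) (hr : |r| < v₁ * v₂) :
    HasSum (fun k : ℕ => nbinomPmf φ r k *
        (Gamma (φ + k + p₁) / Gamma (φ + k) / (γ ^ p₁ * v₁ ^ (φ + k + p₁))) *
        (Gamma (φ + k + p₂) / Gamma (φ + k) / (γ ^ p₂ * v₂ ^ (φ + k + p₂))))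
      ((1 - r) ^ φ * (Gamma (φ + p₁) * Gamma (φ + p₂) / Gamma φ ^ 2) /
        (γ ^ (p₁ + p₂) * (v₁ ^ (φ + p₁) * v₂ ^ (φ + p₂))) *
        hyp2F1 (φ + p₁) (φ + p₂) φ (r / (v₁ * v₂))) := by
  have hne {a : ℝ} (ha : 0 < a) (n : ℕ) : a ≠ -n := by
    have : (0 : ℝ) ≤ n := n.cast_nonneg
    linarith
  have hx : |r / (v₁ * v₂)| < 1 := by
    rw [abs_div, abs_of_pos (mul_pos hv₁ hv₂), div_lt_one (by positivity)]
    exact hr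
  refine ((hasSum_hyp2F1 (hne hp₁) (hne hp₂) (hne hφ) hx).mul_left _).congr_fun fun k => ?_
  have hΓ : Gamma (φ + k) ≠ 0 := (Gamma_pos_of_pos (by positivity)).ne'
  have hΓ₀ := (Gamma_pos_of_pos hφ).ne'
  have hΓ₁ := (Gamma_pos_of_pos hp₁).ne'
  have hΓ₂ := (Gamma_pos_of_pos hp₂).ne'
  have hv_pow {v : ℝ} (hv : 0 < v) (p : ℝ) : v ^ (φ + k + p) = v ^ k * v ^ (φ + p) := by
    rw [← rpow_natCast, ← rpow_add hv]
    ring_nf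
  rw [hv_pow hv₁, hv_pow hv₂, rpow_add hγ, nbinomPmf, div_pow, mul_pow, ← add_assoc, ← add_assoc,
    add_comm (k : ℝ) φ]
  field_simp

lemma hasSum_nbinomPmf_mul_integral_mul_gammaPdf {h₁ h₂ : ℝ → ℝ} (hφ : 0 < φ) (hr₀ : 0 < r)
    (hr₁ : r < 1)
    (hh₁ : ∀ k : ℕ, IntegrableOn (fun z => h₁ z * gammaPdf (φ / (1 - r)) (φ + k) z) (Ioi 0))
    (hh₂ : ∀ k : ℕ, IntegrableOn (fun z => h₂ z * gammaPdf (φ / (1 - r)) (φ + k) z) (Ioi 0))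
    (hsum : Summable fun k : ℕ => nbinomPmf φ r k *
      (∫ z in Ioi 0, ‖h₁ z * gammaPdf (φ / (1 - r)) (φ + k) z‖) *
      ∫ z in Ioi 0, ‖h₂ z * gammaPdf (φ / (1 - r)) (φ + k) z‖) :
    HasSum (fun k : ℕ => nbinomPmf φ r k *
        (∫ z in Ioi 0, h₁ z * gammaPdf (φ / (1 - r)) (φ + k) z) *
        ∫ z in Ioi 0, h₂ z * gammaPdf (φ / (1 - r)) (φ + k) z)
      (∫ z₂ in Ioi 0, ∫ z₁ in Ioi 0, h₁ z₁ * h₂ z₂ * kibble φ r z₁ z₂) := by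
  have hmixture : ∀ z₂ ∈ Ioi (0 : ℝ), ∫ z₁ in Ioi 0, h₁ z₁ * h₂ z₂ * kibble φ r z₁ z₂ =
      ∫ z₁ in Ioi 0, ∑' k : ℕ, nbinomPmf φ r k * (h₁ z₁ * gammaPdf (φ / (1 - r)) (φ + k) z₁) *
        (h₂ z₂ * gammaPdf (φ / (1 - r)) (φ + k) z₂) := by
    refine fun z₂ hz₂ => setIntegral_congr_fun measurableSet_Ioi fun z₁ hz₁ => ?_
    simp only [kibble_eq_tsum_nbinomPmf_mul_gammaPdf hφ hr₀ hr₁ hz₁ hz₂, ← tsum_mul_left]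
    exact tsum_congr fun k => by ring
  rw [setIntegral_congr_fun measurableSet_Ioi hmixture]
  simp_rw [← integral_const_mul (nbinomPmf φ r _)]
  refine hasSum_integral_mul_integral (fun k => (hh₁ k).const_mul _) hh₂ ?_
  simpa only [norm_mul (nbinomPmf φ r _), integral_const_mul,
    norm_of_nonneg (nbinomPmf_nonneg hφ.le hr₀.le hr₁.le _)] using hsum

/-- The factor by which tilting with `exp (-t * z)` scales the rate `φ / (1 - r)` of the gamma
components of `kibble φ r`; it is the paper's `v(u)` for `φ = ν / 2` and `t = u² / (2σ²)`. -/
noncomputable def tiltFactor (φ r t : ℝ) : ℝ :=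
  1 + (1 - r) * t / φ

lemma one_le_tiltFactor {t : ℝ} (hφ : 0 ≤ φ) (hr : r ≤ 1) (ht : 0 ≤ t) :
    1 ≤ tiltFactor φ r t :=
  le_add_of_nonneg_right (div_nonneg (mul_nonneg (sub_nonneg.2 hr) ht) hφ)

theorem integral_rpow_mul_exp_mul_kibble {p₁ p₂ t₁ t₂ : ℝ} (hφ : 0 < φ) (hr₀ : 0 < r)
    (hr₁ : r < 1) (hp₁ : 0 < φ + p₁) (hp₂ : 0 < φ + p₂) (ht₁ : 0 < tiltFactor φ r t₁)
    (ht₂ : 0 < tiltFactor φ r t₂) (hr : r < tiltFactor φ r t₁ * tiltFactor φ r t₂) :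
    ∫ z₂ in Ioi 0, ∫ z₁ in Ioi 0,
        z₁ ^ p₁ * exp (-(t₁ * z₁)) * (z₂ ^ p₂ * exp (-(t₂ * z₂))) * kibble φ r z₁ z₂ =
      (1 - r) ^ φ * (Gamma (φ + p₁) * Gamma (φ + p₂) / Gamma φ ^ 2) /
        ((φ / (1 - r)) ^ (p₁ + p₂) *
          (tiltFactor φ r t₁ ^ (φ + p₁) * tiltFactor φ r t₂ ^ (φ + p₂))) *
        hyp2F1 (φ + p₁) (φ + p₂) φ (r / (tiltFactor φ r t₁ * tiltFactor φ r t₂)) := by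
  have hγ : 0 < φ / (1 - r) := div_pos hφ (sub_pos.2 hr₁)
  have htilt (t : ℝ) : tiltFactor φ r t = 1 + t / (φ / (1 - r)) := by
    rw [tiltFactor, div_div_eq_mul_div, mul_comm t]
  have hshape {p : ℝ} (hp : 0 < φ + p) (k : ℕ) : 0 < φ + k + p := by
    linarith [k.cast_nonneg (α := ℝ)]
  have hint {p t : ℝ} (hp : 0 < φ + p) (ht : 0 < tiltFactor φ r t) (k : ℕ) :
      IntegrableOn (fun z => z ^ p * exp (-(t * z)) * gammaPdf (φ / (1 - r)) (φ + k) z) (Ioi 0) :=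
    integrableOn_rpow_mul_exp_mul_gammaPdf hγ (hshape hp k) (htilt t ▸ ht)
  have hval {p t : ℝ} (hp : 0 < φ + p) (ht : 0 < tiltFactor φ r t) (k : ℕ) :
      ∫ z in Ioi 0, z ^ p * exp (-(t * z)) * gammaPdf (φ / (1 - r)) (φ + k) z =
        Gamma (φ + k + p) / Gamma (φ + k) /
          ((φ / (1 - r)) ^ p * tiltFactor φ r t ^ (φ + k + p)) := by
    rw [htilt] at ht ⊢
    exact integral_rpow_mul_exp_mul_gammaPdf hγ (hshape hp k) ht
  have hnorm (p t : ℝ) (k : ℕ) :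
      ∫ z in Ioi 0, ‖z ^ p * exp (-(t * z)) * gammaPdf (φ / (1 - r)) (φ + k) z‖ =
        ∫ z in Ioi 0, z ^ p * exp (-(t * z)) * gammaPdf (φ / (1 - r)) (φ + k) z :=
    setIntegral_congr_fun measurableSet_Ioi fun z (hz : 0 < z) => norm_of_nonneg <|
      mul_nonneg (by positivity) (gammaPdf_nonneg hγ.le (by positivity) hz.le)
  have hseries := hasSum_nbinomPmf_mul_Gamma_div_Gamma hφ hγ hp₁ hp₂ ht₁ ht₂
    (by rwa [abs_of_pos hr₀])
  refine (hasSum_nbinomPmf_mul_integral_mul_gammaPdf hφ hr₀ hr₁ (hint hp₁ ht₁) (hint hp₂ ht₂)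
    ?_).unique ?_
  · simpa only [hnorm, hval hp₁ ht₁, hval hp₂ ht₂] using hseries.summable
  · simpa only [hval hp₁ ht₁, hval hp₂ ht₂] using hseries

end Kibble

section NormCond

variable {σ μ y : ℝ}

lemma rpow_mul_normCond {z : ℝ} (hz : 0 < z) (q : ℝ) :
    z ^ q * normCond σ μ y z =
      (√(2 * π) * σ)⁻¹ * (z ^ (q + 1 / 2) * exp (-((y - μ) ^ 2 / (2 * σ ^ 2) * z))) := by
  rw [normCond, sqrt_eq_rpow z, rpow_add hz]
  ring_nf

theorem integral_rpow_mul_normCond_mul_kibble {φ r q₁ q₂ μ₁ μ₂ y₁ y₂ : ℝ} (hφ : 0 < φ)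
    (hr₀ : 0 < r) (hr₁ : r < 1) (hq₁ : 0 < φ + (q₁ + 1 / 2)) (hq₂ : 0 < φ + (q₂ + 1 / 2)) :
    ∫ z₂ in Ioi 0, ∫ z₁ in Ioi 0, z₁ ^ q₁ * normCond σ μ₁ y₁ z₁ *
        (z₂ ^ q₂ * normCond σ μ₂ y₂ z₂) * kibble φ r z₁ z₂ =
      (1 - r) ^ φ * (Gamma (φ + (q₁ + 1 / 2)) * Gamma (φ + (q₂ + 1 / 2)) / Gamma φ ^ 2) /
        (2 * π * σ ^ 2 * (φ / (1 - r)) ^ (q₁ + q₂ + 1) *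
          (tiltFactor φ r ((y₁ - μ₁) ^ 2 / (2 * σ ^ 2)) ^ (φ + (q₁ + 1 / 2)) *
            tiltFactor φ r ((y₂ - μ₂) ^ 2 / (2 * σ ^ 2)) ^ (φ + (q₂ + 1 / 2)))) *
        hyp2F1 (φ + (q₁ + 1 / 2)) (φ + (q₂ + 1 / 2)) φ
          (r / (tiltFactor φ r ((y₁ - μ₁) ^ 2 / (2 * σ ^ 2)) *
            tiltFactor φ r ((y₂ - μ₂) ^ 2 / (2 * σ ^ 2)))) := by
  have hv (u : ℝ) : 1 ≤ tiltFactor φ r (u ^ 2 / (2 * σ ^ 2)) :=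
    one_le_tiltFactor hφ.le hr₁.le (by positivity)
  have hconst : (√(2 * π) * σ)⁻¹ * (√(2 * π) * σ)⁻¹ = (2 * π * σ ^ 2)⁻¹ := by
    rw [← mul_inv, mul_mul_mul_comm, mul_self_sqrt (by positivity), sq]
  have hintegrand : ∀ z₂ ∈ Ioi (0 : ℝ),
      ∫ z₁ in Ioi 0, z₁ ^ q₁ * normCond σ μ₁ y₁ z₁ *
          (z₂ ^ q₂ * normCond σ μ₂ y₂ z₂) * kibble φ r z₁ z₂ =
        (2 * π * σ ^ 2)⁻¹ * ∫ z₁ in Ioi 0,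
          z₁ ^ (q₁ + 1 / 2) * exp (-((y₁ - μ₁) ^ 2 / (2 * σ ^ 2) * z₁)) *
            (z₂ ^ (q₂ + 1 / 2) * exp (-((y₂ - μ₂) ^ 2 / (2 * σ ^ 2) * z₂))) *
              kibble φ r z₁ z₂ := fun z₂ hz₂ => by
    rw [← integral_const_mul]
    refine setIntegral_congr_fun measurableSet_Ioi fun z₁ hz₁ => ?_
    simp only [rpow_mul_normCond hz₁, rpow_mul_normCond hz₂, ← hconst]
    ring
  rw [setIntegral_congr_fun measurableSet_Ioi hintegrand, integral_const_mul,
    integral_rpow_mul_exp_mul_kibble hφ hr₀ hr₁ hq₁ hq₂ (one_pos.trans_le (hv _))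
      (one_pos.trans_le (hv _)) (hr₁.trans_le (one_le_mul_of_one_le_of_one_le (hv _) (hv _))),
    show q₁ + 1 / 2 + (q₂ + 1 / 2) = q₁ + q₂ + 1 by ring]
  ring

end NormCond

/-- CLEM E-step, first latent expectation (numerator of `ζ₁`). -/
theorem clem_zeta1 (ν σ r μ₁ μ₂ : ℝ) (hν : 0 < ν) (hσ : 0 < σ)
    (hr : r ∈ Set.Ioo (0 : ℝ) 1) (y₁ y₂ : ℝ) :
    (∫ z₂ in Set.Ioi (0 : ℝ), ∫ z₁ in Set.Ioi (0 : ℝ),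
        z₁ * normCond σ μ₁ y₁ z₁ * normCond σ μ₂ y₂ z₂ * kibble (ν / 2) r z₁ z₂)
      = 2 * (1 - r) ^ (ν / 2 + 2) * Real.Gamma ((ν + 1) / 2) * Real.Gamma ((ν + 3) / 2) /
          (Real.pi * ν ^ 2 * σ ^ 2 * Real.Gamma (ν / 2) ^ 2) *
          hyp2F1 ((ν + 1) / 2) ((ν + 3) / 2) (ν / 2)
            (r / ((1 + (1 - r) * (y₁ - μ₁) ^ 2 / (ν * σ ^ 2)) *
              (1 + (1 - r) * (y₂ - μ₂) ^ 2 / (ν * σ ^ 2)))) /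
          ((1 + (1 - r) * (y₁ - μ₁) ^ 2 / (ν * σ ^ 2)) ^ ((ν + 3) / 2) *
            (1 + (1 - r) * (y₂ - μ₂) ^ 2 / (ν * σ ^ 2)) ^ ((ν + 1) / 2)) := by
  have hv (u : ℝ) : tiltFactor (ν / 2) r (u ^ 2 / (2 * σ ^ 2)) =
      1 + (1 - r) * u ^ 2 / (ν * σ ^ 2) := by
    rw [tiltFactor]
    field_simp
  have hscale : (ν / 2 / (1 - r)) ^ (1 + 0 + 1 : ℝ) = (ν / 2) ^ 2 / (1 - r) ^ 2 := by
    rw [← div_pow, ← rpow_natCast]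
    norm_num
  have hmoment := integral_rpow_mul_normCond_mul_kibble (σ := σ) (μ₁ := μ₁) (μ₂ := μ₂) (y₁ := y₁)
    (y₂ := y₂) (q₁ := 1) (q₂ := 0) (half_pos hν) hr.1 hr.2 (by positivity) (by positivity)
  simp only [rpow_one, rpow_zero, one_mul, hv, hscale, ← mul_assoc] at hmoment
  rw [show ν / 2 + (1 + 1 / 2) = (ν + 3) / 2 by ring,
    show ν / 2 + (0 + 1 / 2) = (ν + 1) / 2 by ring, hyp2F1_comm] at hmoment
  rw [hmoment, rpow_add (sub_pos.2 hr.2), rpow_two]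
  have := sub_pos.2 hr.2
  field_simp
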